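/- Let r ≥ 1 and let Δ₁, …, Δ_r be positive real numbers such that the reciprocals 1/Δ₁, …, 1/Δ_r are linearly independent over ℚ (as elements of ℝ regarded as a ℚ-vector space). Then for every ε > 0 there exist odd positive integers k₁, …, k_r such that |Δ_i k_i − Δ_j k_j| < ε for all i, j ∈ {1, …, r}. -/

import Mathlib

open MeasureTheory UnitAddTorus in
/-- A subgroup of a torus on which no nontrivial character is trivial is dense. -/
theorem UnitAddTorus.dense_addSubgroup_of_forall_mFourier_ne_one {d : Type*} [Fintype d]
    (H : AddSubgroup (UnitAddTorus d))
    (hH : ∀ n : d → ℤ, n ≠ 0 → ∃ h ∈ H, mFourier n h ≠ 1) :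
    Dense (H : Set (UnitAddTorus d)) := by
  have hne : (H : Set (UnitAddTorus d)).Nonempty := ⟨0, H.zero_mem⟩
  let f : C(UnitAddTorus d, ℂ) :=
    ⟨fun x => (Metric.infDist x (H : Set (UnitAddTorus d)) : ℂ),
      Complex.continuous_ofReal.comp (Metric.continuous_infDist_pt _)⟩
  have hf_add : ∀ h ∈ H, ∀ x, f (x + h) = f x := by
    intro h hh x
    have hdist := Metric.infDist_image (x := x) (t := (H : Set (UnitAddTorus d)))
      (isometry_add_right h)
    rw [Set.image_add_right] at hdist
    have hset : (fun y => y + -h) ⁻¹' (H : Set (UnitAddTorus d)) = H := by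
      ext y
      simp [H.add_mem_cancel_right (H.neg_mem hh)]
    rw [hset] at hdist
    exact congrArg Complex.ofReal hdist
  have hcoeff : ∀ n, n ≠ 0 → mFourierCoeff f n = 0 := by
    intro n hn
    obtain ⟨h, hh, hχ⟩ := hH (-n) (neg_ne_zero.mpr hn)
    have hχ_add : ∀ x, mFourier (-n) (x + h) = mFourier (-n) x * mFourier (-n) h := by
      intro x
      simp [mFourier, Finset.prod_mul_distrib, fourier_apply, AddCircle.toCircle_add]
    let _ : MeasureSpace UnitAddCircle := ⟨AddCircle.haarAddCircle⟩
    have : Measure.IsAddHaarMeasure (volume : Measure UnitAddCircle) :=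
      inferInstanceAs (Measure.IsAddHaarMeasure AddCircle.haarAddCircle)
    have hmul : mFourierCoeff f n = mFourierCoeff f n * mFourier (-n) h := by
      calc mFourierCoeff f n = ∫ x, mFourier (-n) (x + h) • f (x + h) :=
            (integral_add_right_eq_self (fun x => mFourier (-n) x • f x) h).symm
        _ = ∫ x, mFourier (-n) x • f x * mFourier (-n) h := by
            refine integral_congr_ae (.of_forall fun x => ?_)
            simp only [hf_add h hh, hχ_add, smul_eq_mul]
            ring
        _ = mFourierCoeff f n * mFourier (-n) h := integral_mul_const _ _
    by_contra h0
    exact hχ (mul_left_cancel₀ h0 (by rw [← hmul, mul_one]))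
  have hval : ∀ x, f x = mFourierCoeff f 0 := by
    intro x
    have hs := hasSum_mFourier_series_apply_of_summable
      (summable_of_ne_finset_zero (s := {0}) fun n hn => hcoeff n (by simpa using hn)) x
    refine hs.unique ?_
    convert! hasSum_single (0 : d → ℤ) fun n hn => ?_
    · simp [mFourier_zero]
    · simp [hcoeff n hn]
  intro x
  rw [Metric.mem_closure_iff_infDist_zero hne]
  have h0 : f x = f 0 := (hval x).trans (hval 0).symm
  have h1 : Metric.infDist (0 : UnitAddTorus d) (H : Set (UnitAddTorus d)) = 0 :=
    Metric.infDist_zero_of_mem H.zero_mem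
  exact (Complex.ofReal_injective h0).trans h1

/-- **Kronecker's theorem** for a one-parameter subgroup of a torus with rationally independent
frequencies. -/
theorem UnitAddTorus.denseRange_coe_mul_of_linearIndependent {d : Type*} [Fintype d] {w : d → ℝ}
    (hw : LinearIndependent ℚ w) :
    DenseRange fun (t : ℝ) (i : d) => ((t * w i : ℝ) : UnitAddCircle) := by
  let φ : ℝ →+ UnitAddTorus d :=
    { toFun := fun t i => ((t * w i : ℝ) : UnitAddCircle)
      map_zero' := by ext i; simp
      map_add' := fun s t => by ext i; simp [add_mul] }
  suffices Dense (φ.range : Set (UnitAddTorus d)) by simpa [DenseRange, φ] using! this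
  refine dense_addSubgroup_of_forall_mFourier_ne_one _ fun n hn => ?_
  have hs : ∑ i, (n i : ℝ) * w i ≠ 0 := by
    intro h0
    refine hn (funext fun i => ?_)
    have := Fintype.linearIndependent_iff.mp hw (fun i => (n i : ℚ))
      (by simpa [Rat.smul_def] using h0) i
    exact_mod_cast this
  set s := ∑ i, (n i : ℝ) * w i with hs_def
  refine ⟨φ (1 / (2 * s)), ⟨_, rfl⟩, ?_⟩
  have : mFourier n (φ (1 / (2 * s))) = -1 := by
    have hexp : ∑ i, 2 * (Real.pi : ℂ) * Complex.I * n i * ((1 / (2 * s) * w i : ℝ) : ℂ)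
        = Real.pi * Complex.I := by
      have : ∑ i, (n i : ℝ) * (1 / (2 * s) * w i) = 1 / 2 := by
        rw [← mul_div_mul_left 1 2 hs, mul_one, mul_comm s 2, hs_def, Finset.sum_div]
        exact Finset.sum_congr rfl fun i _ => by ring
      have hC : ∑ i, (n i : ℂ) * ((1 / (2 * s) * w i : ℝ) : ℂ) = 1 / 2 := by
        simpa using congrArg Complex.ofReal this
      simp_rw [mul_assoc (2 * (Real.pi : ℂ) * Complex.I), ← Finset.mul_sum, hC]
      ring
    rw [← Complex.exp_pi_mul_I, ← hexp, Complex.exp_sum]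
    exact Finset.prod_congr rfl fun i _ => by simp [φ]
  rw [this]
  norm_num

/-- Rationally independent reals have a common multiple approximated by odd integers. -/
theorem exists_odd_abs_mul_sub_lt {d : Type*} [Fintype d] {w : d → ℝ}
    (hw : LinearIndependent ℚ w) {δ : ℝ} (hδ : 0 < δ) :
    ∃ (t : ℝ) (m : d → ℤ), (∀ i, Odd (m i)) ∧ ∀ i, |t * w i - m i| < δ := by
  obtain ⟨t, ht⟩ := (UnitAddTorus.denseRange_coe_mul_of_linearIndependent hw).exists_dist_lt
    (fun _ => ((1 / 2 : ℝ) : UnitAddCircle)) (half_pos hδ)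
  refine ⟨2 * t, fun i => 1 - 2 * round (1 / 2 - t * w i), fun i => ?_, fun i => ?_⟩
  · exact ⟨-round (1 / 2 - t * w i), by ring⟩
  · have hi := (dist_pi_lt_iff (half_pos hδ)).mp ht i
    rw [dist_eq_norm, ← AddCircle.coe_sub, UnitAddCircle.norm_eq, abs_lt] at hi
    push_cast
    rw [abs_lt]
    constructor <;> linarith


/-- Diophantine core of the proof of Theorem 1.8: if the reciprocals
`1/Δ₁, …, 1/Δ_r` are linearly independent over `ℚ`, then for every `ε > 0`
there are odd positive integers `k₁, …, k_r` with `|Δ_i k_i − Δ_j k_j| < ε`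
for all `i, j`. -/
theorem perfect_reeb_stmt4 (r : ℕ) (hr : 1 ≤ r) (Δ : Fin r → ℝ)
    (hΔ : ∀ i, 0 < Δ i)
    (hind : LinearIndependent ℚ (fun i : Fin r => (Δ i)⁻¹))
    (ε : ℝ) (hε : 0 < ε) :
    ∃ k : Fin r → ℕ, (∀ i, Odd (k i)) ∧ (∀ i, 0 < k i) ∧
      ∀ i j, |Δ i * (k i : ℝ) - Δ j * (k j : ℝ)| < ε := by
  have hne : Nonempty (Fin r) := ⟨⟨0, hr⟩⟩
  obtain ⟨a, ha⟩ := Finite.exists_max Δ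
  obtain ⟨t, m, hodd, hm⟩ := exists_odd_abs_mul_sub_lt hind (div_pos (half_pos hε) (hΔ a))
  have hclose : ∀ i, |Δ i * m i - t| < ε / 2 := by
    intro i
    have hcalc : Δ i * m i - t = -(Δ i * (t * (Δ i)⁻¹ - m i)) := by
      have := (hΔ i).ne'
      field_simp
      ring
    rw [hcalc, abs_neg, abs_mul, abs_of_pos (hΔ i)]
    calc Δ i * |t * (Δ i)⁻¹ - m i| < Δ i * (ε / 2 / Δ a) :=
          mul_lt_mul_of_pos_left (hm i) (hΔ i)
      _ ≤ Δ a * (ε / 2 / Δ a) := mul_le_mul_of_nonneg_right (ha i) (div_pos (half_pos hε) (hΔ a)).le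
      _ = ε / 2 := mul_div_cancel₀ _ (hΔ a).ne'
  have habs : ∀ i, |Δ i * ((m i).natAbs : ℝ) - abs t| < ε / 2 := by
    intro i
    have hcast : Δ i * ((m i).natAbs : ℝ) = |Δ i * m i| := by
      rw [abs_mul, abs_of_pos (hΔ i), Nat.cast_natAbs, Int.cast_abs]
    rw [hcast]
    exact (abs_abs_sub_abs_le _ _).trans_lt (hclose i)
  refine ⟨fun i => (m i).natAbs, fun i => Int.natAbs_odd.mpr (hodd i),
    fun i => (Int.natAbs_odd.mpr (hodd i)).pos, fun i j => ?_⟩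
  have hi := abs_lt.mp (habs i)
  have hj := abs_lt.mp (habs j)
  rw [abs_lt]
  constructor <;> linarith
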